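/- arXiv:1009.5375 — 2 statements merged into one kernel-verified Lean document; each statement's English description precedes it below -/
import Mathlib

section
/- Let p = 2n + 1 be an odd prime and let m be an integer with m ≢ 0 (mod p) and m ≢ 4 (mod p). Then ∑_{k=1}^n (C(2k,k)/m^k) · H_k^{(2)} ≡ −ℓ · ∑_{k=1}^n C(2k,k)·H_k/(k·(4−m)^k) (mod p), where ℓ ∈ {1, −1} is the Legendre symbol of m(m−4) modulo p. -/
/-- `H n` is the harmonic number `∑_{k=1}^n 1/k`. -/
def H (n : ℕ) : ℚ := ∑ k ∈ Finset.Icc 1 n, (1 : ℚ) / k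

/-- `H2 n` is the second-order harmonic number `∑_{k=1}^n 1/k²`. -/
def H2 (n : ℕ) : ℚ := ∑ k ∈ Finset.Icc 1 n, (1 : ℚ) / k ^ 2

/-- The Euler numbers: `E 0 = 1` and `∑_{0 ≤ k ≤ n, k even} C(n,k) E_{n-k} = 0` for `n ≥ 1`. -/
def eulerNumber : ℕ → ℚ
  | 0 => 1
  | n + 1 =>
      -∑ j ∈ (Finset.range (n + 1)).attach,
        if Even (n + 1 - j.1) then ((n + 1).choose (n + 1 - j.1) : ℚ) * eulerNumber j.1 else 0
decreasing_by exact Finset.mem_range.mp j.2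

/-- For rationals, `a ≡ b (mod m)` : `m` divides the numerator of `a - b` in lowest terms. -/
def ratModEq (m : ℕ) (a b : ℚ) : Prop := (m : ℤ) ∣ (a - b).num


theorem pascal_sum (n : ℕ) (f : ℕ → ℚ) :
    ∑ k ∈ Finset.range (n + 2), ((n + 1).choose k : ℚ) * f k
      = ∑ k ∈ Finset.range (n + 1), (n.choose k : ℚ) * f k
        + ∑ k ∈ Finset.range (n + 1), (n.choose k : ℚ) * f (k + 1) := by
  rw [Finset.sum_range_succ']
  have h : ∑ k ∈ Finset.range (n + 1), (n.choose k : ℚ) * f k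
      = ∑ k ∈ Finset.range (n + 1), (n.choose (k + 1) : ℚ) * f (k + 1) + f 0 := by
    have := Finset.sum_range_succ (fun k => (n.choose k : ℚ) * f k) (n + 1)
    rw [Finset.sum_range_succ'] at this
    simp at this
    linarith
  rw [h]
  simp only [Nat.choose_succ_succ, Nat.cast_add, add_mul, Finset.sum_add_distrib]
  simp
  ring

/-- Binomial transform. -/
def binT (f : ℕ → ℚ) (j : ℕ) : ℚ :=
  ∑ k ∈ Finset.range (j + 1), (j.choose k : ℚ) * ((-1) ^ k * f k)

theorem binT_succ (f : ℕ → ℚ) (j : ℕ) :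
    binT f (j + 1) = binT f j - binT (fun k => f (k + 1)) j := by
  unfold binT
  rw [pascal_sum, sub_eq_add_neg, ← Finset.sum_neg_distrib]
  congr 1
  apply Finset.sum_congr rfl
  intro k _
  ring

theorem transform (x : ℚ) (n : ℕ) : ∀ g : ℕ → ℚ,
    ∑ k ∈ Finset.range (n + 1), (n.choose k : ℚ) * (g k * (-x) ^ k * (1 + x) ^ (n - k))
      = ∑ j ∈ Finset.range (n + 1), (n.choose j : ℚ) * (x ^ j * binT g j) := by
  induction n with
  | zero => intro g; simp [binT]
  | succ n ih =>
    intro g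
    rw [pascal_sum, pascal_sum]
    have h1 : ∑ k ∈ Finset.range (n + 1), (n.choose k : ℚ) *
        (g k * (-x) ^ k * (1 + x) ^ (n + 1 - k)) = (1 + x) *
        ∑ k ∈ Finset.range (n + 1), (n.choose k : ℚ) * (g k * (-x) ^ k * (1 + x) ^ (n - k)) := by
      rw [Finset.mul_sum]
      apply Finset.sum_congr rfl
      intro k hk
      have : n + 1 - k = (n - k) + 1 := by have := Finset.mem_range.mp hk; omega
      rw [this]; ring
    have h2 : ∑ k ∈ Finset.range (n + 1), (n.choose k : ℚ) *
        (g (k + 1) * (-x) ^ (k + 1) * (1 + x) ^ (n + 1 - (k + 1))) = (-x) *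
        ∑ k ∈ Finset.range (n + 1), (n.choose k : ℚ) *
          ((fun i => g (i + 1)) k * (-x) ^ k * (1 + x) ^ (n - k)) := by
      rw [Finset.mul_sum]
      apply Finset.sum_congr rfl
      intro k hk
      rw [Nat.add_sub_add_right]; ring
    rw [h1, h2, ih g, ih (fun i => g (i + 1))]
    have h3 : ∑ k ∈ Finset.range (n + 1), (n.choose k : ℚ) * (x ^ (k + 1) * binT g (k + 1))
        = x * ∑ k ∈ Finset.range (n + 1), (n.choose k : ℚ) * (x ^ k * binT g k)
        - x * ∑ k ∈ Finset.range (n + 1), (n.choose k : ℚ) *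
          (x ^ k * binT (fun i => g (i + 1)) k) := by
      rw [Finset.mul_sum, Finset.mul_sum, ← Finset.sum_sub_distrib]
      apply Finset.sum_congr rfl
      intro k hk
      rw [binT_succ]; ring
    rw [h3]; ring

theorem H_succ (n : ℕ) : H (n + 1) = H n + 1 / ((n : ℚ) + 1) := by
  unfold H
  rw [Finset.sum_Icc_succ_top (by omega)]; push_cast; rfl

theorem H2_succ (n : ℕ) : H2 (n + 1) = H2 n + 1 / ((n : ℚ) + 1) ^ 2 := by
  unfold H2
  rw [Finset.sum_Icc_succ_top (by omega)]; push_cast; rfl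

theorem binT_div (f : ℕ → ℚ) (j : ℕ) :
    binT (fun k => f (k + 1) / ((k : ℚ) + 1)) j
      = (f 0 - binT f (j + 1)) / ((j : ℚ) + 1) := by
  have hj : (j : ℚ) + 1 ≠ 0 := by positivity
  rw [eq_div_iff hj]
  unfold binT
  rw [Finset.sum_range_succ' _ (j + 1)]
  simp only [pow_zero, one_mul, Nat.choose_zero_right, Nat.cast_one]
  rw [sub_add_cancel_right, ← Finset.sum_neg_distrib, Finset.sum_mul]
  apply Finset.sum_congr rfl
  intro k _
  have hk : (k : ℚ) + 1 ≠ 0 := by positivity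
  have h : ((j : ℚ) + 1) * (j.choose k) = ((j + 1).choose (k + 1)) * ((k : ℚ) + 1) := by
    exact_mod_cast Nat.add_one_mul_choose_eq j k
  field_simp
  linear_combination (f (k + 1) * (-1) ^ k) * h

theorem binT_one (j : ℕ) : binT (fun _ => 1) (j + 1) = 0 := by
  rw [binT_succ]; ring

theorem binT_H (j : ℕ) : binT H (j + 1) = - 1 / ((j : ℚ) + 1) := by
  rw [binT_succ]
  have h1 : binT (fun k => H (k + 1)) j
      = binT H j + binT (fun k => (fun _ => (1 : ℚ)) (k + 1) / ((k : ℚ) + 1)) j := by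
    unfold binT
    rw [← Finset.sum_add_distrib]
    apply Finset.sum_congr rfl
    intro k _
    simp only [H_succ]; ring
  rw [h1, binT_div (fun _ => (1 : ℚ)) j, binT_one]; ring

theorem binT_Hdiv (j : ℕ) : binT (fun k => H k / k) j = - H2 j := by
  induction j with
  | zero => simp [binT, H2]
  | succ j ih =>
    rw [binT_succ, ih, H2_succ]
    have := binT_div H j
    push_cast
    rw [this, binT_H]
    have hj : (j : ℚ) + 1 ≠ 0 := by positivity
    simp only [H, Finset.Icc_eq_empty_of_lt zero_lt_one, Finset.sum_empty]
    field_simp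
    ring

theorem range_to_Icc (n : ℕ) (f : ℕ → ℚ) (h0 : f 0 = 0) :
    ∑ k ∈ Finset.range (n + 1), f k = ∑ k ∈ Finset.Icc 1 n, f k := by
  rw [Finset.range_eq_Ico, Finset.sum_eq_sum_Ico_succ_bot (by omega), h0, zero_add]
  rfl

/-- Exact rational identity. -/
theorem exact_identity (n : ℕ) (m : ℚ) (h0 : m ≠ 0) (h4 : 4 - m ≠ 0) :
    ∑ k ∈ Finset.Icc 1 n, ((n.choose k : ℚ) * (-4) ^ k) / m ^ k * H2 k
      = -((m - 4) / m) ^ n *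
        ∑ k ∈ Finset.Icc 1 n, ((n.choose k : ℚ) * (-4) ^ k) * H k / (k * (4 - m) ^ k) := by
  have h := transform (-4 / m) n (fun k => H k / k)
  simp only [binT_Hdiv] at h
  rw [range_to_Icc _ _ (by simp), range_to_Icc _ _ (by simp [H2])] at h
  have e1 : ∑ k ∈ Finset.Icc 1 n, ((n.choose k : ℚ) * (-4) ^ k) / m ^ k * H2 k
     = - ∑ j ∈ Finset.Icc 1 n, (n.choose j : ℚ) * ((-4 / m) ^ j * -H2 j) := by
    rw [← Finset.sum_neg_distrib]
    apply Finset.sum_congr rfl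
    intro k _
    rw [div_pow]; ring
  rw [e1, ← h, neg_mul, Finset.mul_sum]
  congr 1
  apply Finset.sum_congr rfl
  intro k hk
  have hkn := (Finset.mem_Icc.mp hk).2
  obtain ⟨d, rfl⟩ := Nat.exists_eq_add_of_le hkn
  have hk0 : (k : ℚ) ≠ 0 := by have := (Finset.mem_Icc.mp hk).1; positivity
  have e2 : (1 + -4 / m) = (m - 4) / m := by field_simp; ring
  have e3 : (-(-4 / m)) = ((m - 4) / m) * (-4 / (4 - m)) := by
    field_simp; ring
  rw [e2, e3, Nat.add_sub_cancel_left, mul_pow, div_pow (-4 : ℚ), pow_add]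
  field_simp

theorem ratModEq_of (p : ℕ) [Fact p.Prime] (a b : ℚ) (h : padicNorm p (a - b) < 1) :
    ratModEq p a b := by
  unfold ratModEq
  rw [← padicNorm.int_lt_one_iff, ← Rat.mul_den_eq_num, padicNorm.mul]
  exact mul_lt_one_of_nonneg_of_lt_one_left (padicNorm.nonneg _) h (padicNorm.of_nat _)

theorem padicNorm_pow_one (p : ℕ) [Fact p.Prime] (x : ℚ) (h : padicNorm p x = 1) (k : ℕ) :
    padicNorm p (x ^ k) = 1 := by
  induction k with
  | zero => simp
  | succ k ih => rw [pow_succ, padicNorm.mul, ih, h, one_mul]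

theorem norm_H (p n : ℕ) [Fact p.Prime] (hn : ∀ k ∈ Finset.Icc 1 n, padicNorm p (k : ℚ) = 1) :
    padicNorm p (H n) ≤ 1 := by
  apply padicNorm.sum_le' _ zero_le_one
  intro k hk
  rw [padicNorm.div, hn k hk]; simp

theorem norm_H2 (p n : ℕ) [Fact p.Prime] (hn : ∀ k ∈ Finset.Icc 1 n, padicNorm p (k : ℚ) = 1) :
    padicNorm p (H2 n) ≤ 1 := by
  apply padicNorm.sum_le' _ zero_le_one
  intro k hk
  rw [padicNorm.div, padicNorm_pow_one p _ (hn k hk)]; simp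

theorem cb_mod (p n : ℕ) [Fact p.Prime] (hpn : p = 2 * n + 1) (k : ℕ) (hk : k ≤ n) :
    (((2 * k).choose k : ℤ) : ZMod p) = ((n.choose k * (-4) ^ k : ℤ) : ZMod p) := by
  induction k with
  | zero => simp
  | succ k ih =>
    have ih := ih (by omega)
    have hne : ((k + 1 : ℕ) : ZMod p) ≠ 0 := by
      intro h
      rw [ZMod.natCast_eq_zero_iff] at h
      have := Nat.le_of_dvd (by omega) h
      omega
    have h1 := congrArg (fun t : ℕ => (t : ZMod p)) (Nat.succ_mul_centralBinom_succ k)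
    have h2 := congrArg (fun t : ℕ => (t : ZMod p)) (Nat.choose_succ_right_eq n k)
    have h3 : ((2 * n + 1 : ℕ) : ZMod p) = 0 := by rw [← hpn]; simp
    simp only [Nat.centralBinom] at h1
    apply mul_left_cancel₀ hne
    push_cast [Nat.cast_sub (show k ≤ n by omega)] at *
    rw [pow_succ]
    linear_combination h1 + 2 * (2 * (k : ZMod p) + 1) * ih + 4 * (-4) ^ k * h2
      + 2 * (n.choose k : ZMod p) * (-4) ^ k * h3

theorem small_of_zmod (p : ℕ) [Fact p.Prime] (a b : ℤ) (h : (a : ZMod p) = b) :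
    padicNorm p ((a : ℚ) - b) < 1 := by
  rw [← Int.cast_sub, padicNorm.int_lt_one_iff, ← ZMod.intCast_zmod_eq_zero_iff_dvd]
  push_cast
  rw [h, sub_self]

theorem pnorm_small_mul (p : ℕ) [Fact p.Prime] (a b : ℚ) (ha : padicNorm p a < 1)
    (hb : padicNorm p b ≤ 1) : padicNorm p (a * b) < 1 := by
  rw [padicNorm.mul]
  exact mul_lt_one_of_nonneg_of_lt_one_left (padicNorm.nonneg _) ha hb

theorem pnorm_small_add (p : ℕ) [Fact p.Prime] (a b : ℚ) (ha : padicNorm p a < 1)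
    (hb : padicNorm p b < 1) : padicNorm p (a + b) < 1 :=
  lt_of_le_of_lt padicNorm.nonarchimedean (max_lt ha hb)

theorem legendre_small (p n : ℕ) [hp : Fact p.Prime] (hpn : p = 2 * n + 1)
    (m : ℤ) (hm0 : ¬ (p : ℤ) ∣ m) :
    padicNorm p (((legendreSym p (m * (m - 4)) : ℤ) : ℚ) - (((m : ℚ) - 4) / m) ^ n) < 1 := by
  have hmq : (m : ℚ) ≠ 0 := by
    rintro h
    have : m = 0 := by exact_mod_cast h
    exact hm0 (by simp [this])
  have hmz : (m : ZMod p) ≠ 0 := by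
    rwa [Ne, ZMod.intCast_zmod_eq_zero_iff_dvd]
  have key : ((legendreSym p (m * (m - 4)) * m ^ n : ℤ) : ZMod p) = (((m - 4) ^ n : ℤ) : ZMod p) := by
    push_cast
    rw [legendreSym.eq_pow]
    have : p / 2 = n := by omega
    rw [this]
    have hf := ZMod.pow_card_sub_one_eq_one hmz
    have : p - 1 = n + n := by omega
    rw [this, pow_add] at hf
    push_cast
    rw [mul_pow]
    linear_combination ((m : ZMod p) - 4) ^ n * hf
  have h := small_of_zmod p _ _ key
  have hu : padicNorm p ((m : ℚ) ^ n) = 1 :=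
    padicNorm_pow_one p _ ((padicNorm.int_eq_one_iff m).mpr hm0) n
  have e : (((legendreSym p (m * (m - 4)) : ℤ) : ℚ) - (((m : ℚ) - 4) / m) ^ n)
      = (((legendreSym p (m * (m - 4)) * m ^ n : ℤ) : ℚ) - ((m - 4) ^ n : ℤ)) / (m : ℚ) ^ n := by
    rw [div_pow]
    push_cast
    field_simp
  rw [e, padicNorm.div, hu, div_one]
  exact h

theorem stmt12 (p n : ℕ) (hp : Fact p.Prime) (hpn : p = 2 * n + 1)
    (m : ℤ) (hm0 : ¬ (p : ℤ) ∣ m) (hm4 : ¬ (p : ℤ) ∣ (m - 4)) :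
    ratModEq p
      (∑ k ∈ Finset.Icc 1 n, ((2 * k).choose k : ℚ) / (m : ℚ) ^ k * H2 k)
      (-((@legendreSym p hp (m * (m - 4)) : ℤ) : ℚ) *
        ∑ k ∈ Finset.Icc 1 n, ((2 * k).choose k : ℚ) * H k / (k * ((4 - m : ℤ) : ℚ) ^ k)) := by
  have hnk : ∀ k ∈ Finset.Icc 1 n, padicNorm p (k : ℚ) = 1 := by
    intro k hk
    rw [Finset.mem_Icc] at hk
    rw [padicNorm.nat_eq_one_iff]
    intro h
    have := Nat.le_of_dvd (by omega) h
    omega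
  have hsub : ∀ k ∈ Finset.Icc 1 n, ∀ j ∈ Finset.Icc 1 k, padicNorm p (j : ℚ) = 1 := by
    intro k hk j hj
    rw [Finset.mem_Icc] at hk hj
    exact hnk j (Finset.mem_Icc.mpr ⟨hj.1, hj.2.trans hk.2⟩)
  have hm1 : padicNorm p (m : ℚ) = 1 := (padicNorm.int_eq_one_iff m).mpr hm0
  have hm41 : padicNorm p ((4 - m : ℤ) : ℚ) = 1 :=
    (padicNorm.int_eq_one_iff _).mpr (by rwa [← dvd_neg, neg_sub])
  have hmq : (m : ℚ) ≠ 0 := by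
    intro h; rw [h] at hm1; simp at hm1
  have hmq4 : 4 - (m : ℚ) ≠ 0 := by
    intro h
    have h' : ((4 - m : ℤ) : ℚ) = 0 := by push_cast; exact h
    rw [h'] at hm41; simp at hm41
  have hcb : ∀ k ∈ Finset.Icc 1 n,
      padicNorm p (((2 * k).choose k : ℚ) - (n.choose k : ℚ) * (-4) ^ k) < 1 := by
    intro k hk
    have := small_of_zmod p _ _ (cb_mod p n hpn k (Finset.mem_Icc.mp hk).2)
    push_cast at this
    exact this
  have hex := exact_identity n m hmq hmq4
  have hleg := legendre_small p n hpn m hm0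
  have hw : ∀ k ∈ Finset.Icc 1 n, padicNorm p (H k / (k * ((4 - m : ℤ) : ℚ) ^ k)) ≤ 1 := by
    intro k hk
    rw [padicNorm.div, padicNorm.mul, hnk k hk, padicNorm_pow_one p _ hm41]
    simpa using norm_H p k (hsub k hk)
  apply ratModEq_of
  have hL : padicNorm p (∑ k ∈ Finset.Icc 1 n,
      (((2 * k).choose k : ℚ) - (n.choose k : ℚ) * (-4) ^ k) * (H2 k / (m : ℚ) ^ k)) < 1 := by
    apply padicNorm.sum_lt' _ zero_lt_one
    intro k hk
    apply pnorm_small_mul _ _ _ (hcb k hk)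
    rw [padicNorm.div, padicNorm_pow_one p _ hm1, div_one]
    exact norm_H2 p k (hsub k hk)
  have hR : padicNorm p (∑ k ∈ Finset.Icc 1 n,
      (((2 * k).choose k : ℚ) - (n.choose k : ℚ) * (-4) ^ k) *
        (H k / (k * ((4 - m : ℤ) : ℚ) ^ k))) < 1 := by
    apply padicNorm.sum_lt' _ zero_lt_one
    intro k hk
    exact pnorm_small_mul _ _ _ (hcb k hk) (hw k hk)
  have hR' : padicNorm p (∑ k ∈ Finset.Icc 1 n,
      ((n.choose k : ℚ) * (-4) ^ k) * (H k / (k * ((4 - m : ℤ) : ℚ) ^ k))) ≤ 1 := by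
    apply padicNorm.sum_le' _ zero_le_one
    intro k hk
    rw [padicNorm.mul]
    refine mul_le_one₀ ?_ (padicNorm.nonneg _) (hw k hk)
    have := padicNorm.of_int (p := p) ((n.choose k : ℤ) * (-4) ^ k)
    push_cast at this
    exact this
  have hfin := pnorm_small_add p _ _ (pnorm_small_add p _ _ hL
    (pnorm_small_mul p _ _ hR (padicNorm.of_int (p := p) (legendreSym p (m * (m - 4))))))
    (pnorm_small_mul p _ _ hleg hR')
  convert hfin using 2
  simp only [sub_mul, Finset.sum_sub_distrib]
  have c1 : ∀ a : ℕ → ℚ, ∑ k ∈ Finset.Icc 1 n, a k / (m : ℚ) ^ k * H2 k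
      = ∑ k ∈ Finset.Icc 1 n, a k * (H2 k / (m : ℚ) ^ k) := by
    intro a
    exact Finset.sum_congr rfl fun k _ => by ring
  have c2 : ∀ a : ℕ → ℚ, ∑ k ∈ Finset.Icc 1 n, a k * H k / (k * ((4 - m : ℤ) : ℚ) ^ k)
      = ∑ k ∈ Finset.Icc 1 n, a k * (H k / (k * ((4 - m : ℤ) : ℚ) ^ k)) := by
    intro a
    exact Finset.sum_congr rfl fun k _ => by ring
  have e4 : (4 : ℚ) - m = ((4 - m : ℤ) : ℚ) := by push_cast; rfl
  rw [e4, c1 (fun k => (n.choose k : ℚ) * (-4) ^ k),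
    c2 (fun k => (n.choose k : ℚ) * (-4) ^ k)] at hex
  rw [c1 (fun k => ((2 * k).choose k : ℚ)), c2 (fun k => ((2 * k).choose k : ℚ)), hex]
  ring
end

section
/- Let p be an odd prime. Then ∑_{1 ≤ k ≤ p-1, k ≡ 2 (mod 4)} H_k/k ≡ (3/16)·q_p(2)² (mod p), where q_p(2) = (2^{p-1} − 1)/p. -/
open Polynomial

section aux
variable {K : Type*} [Field K] (p : ℕ)

/-- finite harmonic number in K -/
def hK (K : Type*) [Field K] (n : ℕ) : K := ∑ j ∈ Finset.range (n + 1), (j : K)⁻¹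

noncomputable def L1 (K : Type*) [Field K] (p : ℕ) : K[X] :=
  ∑ k ∈ Finset.range p, C ((k : K)⁻¹) * X ^ k
noncomputable def L2 (K : Type*) [Field K] (p : ℕ) : K[X] :=
  ∑ k ∈ Finset.range p, C ((k : K)⁻¹ ^ 2) * X ^ k
noncomputable def FF (K : Type*) [Field K] (p : ℕ) : K[X] :=
  ∑ k ∈ Finset.range p, C (hK K k * (k : K)⁻¹) * X ^ k

lemma natCast_ne [CharP K p] {k : ℕ} (h0 : k ≠ 0) (hk : k < p) : (k : K) ≠ 0 := by
  rw [Ne, CharP.cast_eq_zero_iff K p]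
  exact fun h => absurd (Nat.le_of_dvd (Nat.pos_of_ne_zero h0) h) (by omega)

lemma deg_sum_lt (hp : 0 < p) (a : ℕ → K) :
    (∑ k ∈ Finset.range p, C (a k) * X ^ k : K[X]).natDegree ≤ p - 1 := by
  apply natDegree_sum_le_of_forall_le
  intro k hk
  have := Finset.mem_range.1 hk
  exact (natDegree_C_mul_X_pow_le _ _).trans (by omega)

lemma X_deriv (a : ℕ → K) :
    X * derivative (∑ k ∈ Finset.range p, C (a k) * X ^ k : K[X])
      = ∑ k ∈ Finset.range p, C (k * a k) * X ^ k := by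
  rw [derivative_sum, Finset.mul_sum]
  refine Finset.sum_congr rfl fun k _ => ?_
  rcases k with _ | k
  · simp
  · rw [derivative_C_mul_X_pow, Nat.add_sub_cancel, C_mul, C_mul]; ring

lemma XL1 [CharP K p] (hp : 0 < p) : X * (1 - X) * derivative (L1 K p) = X - X ^ p := by
  have h : X * derivative (L1 K p) = (∑ k ∈ Finset.range p, X ^ k) - 1 := by
    rw [L1, X_deriv]
    obtain ⟨n, rfl⟩ : ∃ n, p = n + 1 := ⟨p - 1, by omega⟩
    rw [Finset.sum_range_succ', Finset.sum_range_succ' (fun k => (X : K[X]) ^ k)]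
    simp only [pow_zero, add_sub_cancel_right]
    simp only [Nat.cast_zero, zero_mul, C_0, add_zero]
    refine Finset.sum_congr rfl fun k hk => ?_
    have := Finset.mem_range.1 hk
    rw [mul_inv_cancel₀ (natCast_ne (K := K) (n+1) (by omega) (by omega))]
    simp
  have h2 := mul_neg_geom_sum (X : K[X]) p
  linear_combination (1 - X) * h + h2

lemma XL2 [CharP K p] : X * derivative (L2 K p) = L1 K p := by
  rw [L2, X_deriv, L1]
  refine Finset.sum_congr rfl fun k hk => ?_
  rcases Nat.eq_zero_or_pos k with rfl | h
  · simp
  have := natCast_ne (K := K) p (by omega) (Finset.mem_range.1 hk)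
  congr 2
  field_simp

lemma geomH (n : ℕ) (hn : 0 < n) : (1 - X) * ∑ k ∈ Finset.range n, C (hK K k) * X ^ k
    = (∑ k ∈ Finset.range n, C ((k : K)⁻¹) * X ^ k) - C (hK K (n - 1)) * X ^ n := by
  induction n, hn using Nat.le_induction with
  | base => simp [hK]
  | succ n hn ih =>
    rw [Finset.sum_range_succ, Finset.sum_range_succ, mul_add, ih]
    have : hK K n = hK K (n - 1) + (n : K)⁻¹ := by
      unfold hK; rw [Finset.sum_range_succ, Nat.sub_add_cancel hn]
    simp only [Nat.add_sub_cancel, this, C_add]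
    ring

/-- inversion -/
lemma inv_sum [CharP K p] (hp : 0 < p) (r : ℕ) (x y : K) (hxy : x * y = 1) (hr : r ≠ 0):
    x ^ p * (∑ k ∈ Finset.range p, (k : K)⁻¹ ^ r * y ^ k)
      = (-1) ^ r * ∑ k ∈ Finset.range p, (k : K)⁻¹ ^ r * x ^ k := by
  obtain ⟨n, rfl⟩ : ∃ n, p = n + 1 := ⟨p - 1, by omega⟩
  rw [Finset.sum_range_succ', Finset.sum_range_succ' (fun k : ℕ => (k : K)⁻¹ ^ r * x ^ k)]
  simp only [Nat.cast_zero, inv_zero, zero_pow hr, zero_mul, add_zero]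
  rw [← Finset.sum_range_reflect, Finset.mul_sum, Finset.mul_sum]
  refine Finset.sum_congr rfl fun k hk => ?_
  have := Finset.mem_range.1 hk
  have e : n - 1 - k + 1 = n - k := by omega
  rw [e]
  have hc : ((n - k : ℕ) : K) = - ((k + 1 : ℕ) : K) := by
    have : ((n - k : ℕ) : K) + ((k + 1 : ℕ) : K) = ((n + 1 : ℕ) : K) := by
      rw [← Nat.cast_add]; congr 1; omega
    rw [CharP.cast_eq_zero K (n + 1)] at this
    linear_combination this
  have hx : x ^ (n + 1) * y ^ (n - k) = x ^ (k + 1) := by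
    have : n + 1 = (k + 1) + (n - k) := by omega
    rw [this, pow_add, mul_assoc, ← mul_pow, hxy]; simp
  rw [hc, inv_neg, neg_pow, ← hx]; ring

lemma L1_eval (x : K) : (L1 K p).eval x = ∑ k ∈ Finset.range p, (k : K)⁻¹ ^ 1 * x ^ k := by
  simp [L1, eval_finsetSum]
lemma L2_eval (x : K) : (L2 K p).eval x = ∑ k ∈ Finset.range p, (k : K)⁻¹ ^ 2 * x ^ k := by
  simp [L2, eval_finsetSum]
lemma L1_inv [CharP K p] (hp : 0 < p) (x y : K) (hxy : x * y = 1) :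
    x ^ p * (L1 K p).eval y = - (L1 K p).eval x := by
  rw [L1_eval, L1_eval, inv_sum p hp 1 x y hxy (by simp)]; ring
lemma L2_inv [CharP K p] (hp : 0 < p) (x y : K) (hxy : x * y = 1) :
    x ^ p * (L2 K p).eval y = (L2 K p).eval x := by
  rw [L2_eval, L2_eval, inv_sum p hp 2 x y hxy (by simp)]; ring

lemma two_ne [CharP K p] (hp : p.Prime) (hodd : Odd p) : (2 : K) ≠ 0 := by
  have h2 : 2 < p := by
    have := hp.two_le
    rcases hodd with ⟨m, rfl⟩; omega
  exact_mod_cast natCast_ne (K := K) p (k := 2) (by simp) h2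

lemma L1_one [CharP K p] (hp : p.Prime) (hodd : Odd p) : (L1 K p).eval 1 = 0 := by
  have h := L1_inv (K := K) p hp.pos 1 1 (by simp)
  have h2 := two_ne (K := K) p hp hodd
  rw [one_pow] at h
  have : 2 * (L1 K p).eval 1 = 0 := by linear_combination h
  exact (mul_eq_zero.1 this).resolve_left h2

lemma hK_last [CharP K p] (hp : p.Prime) (hodd : Odd p) : hK K (p - 1) = 0 := by
  have h := L1_one (K := K) p hp hodd
  rw [L1_eval] at h
  rw [hK, Nat.sub_add_cancel hp.pos]
  simpa using h

lemma XFF [CharP K p] (hp : p.Prime) (hodd : Odd p) :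
    X * (1 - X) * derivative (FF K p) = L1 K p := by
  have h := geomH (K := K) p hp.pos
  rw [hK_last p hp hodd] at h
  have h1 : X * derivative (FF K p) = ∑ k ∈ Finset.range p, C (hK K k) * X ^ k := by
    rw [FF, X_deriv]
    refine Finset.sum_congr rfl fun k hk => ?_
    rcases Nat.eq_zero_or_pos k with rfl | h
    · simp [hK]
    have := natCast_ne (K := K) p (by omega) (Finset.mem_range.1 hk)
    congr 2
    field_simp
  rw [mul_comm X, mul_assoc, h1, h, L1]; simp

lemma L1_zero : (L1 K p).eval 0 = 0 := by
  rw [L1_eval]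
  refine Finset.sum_eq_zero fun k _ => ?_
  rcases k with _ | k <;> simp
lemma L2_zero : (L2 K p).eval 0 = 0 := by
  rw [L2_eval]
  refine Finset.sum_eq_zero fun k _ => ?_
  rcases k with _ | k <;> simp
lemma FF_zero : (FF K p).eval 0 = 0 := by
  rw [FF, eval_finsetSum]
  refine Finset.sum_eq_zero fun k _ => ?_
  rcases k with _ | k <;> simp

lemma FF_one [CharP K p] (hp : p.Prime) (hodd : Odd p) :
    2 * (FF K p).eval 1 = (L2 K p).eval 1 := by
  have key : ∀ n : ℕ, 2 * ∑ k ∈ Finset.range (n + 1), hK K k * (k : K)⁻¹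
      = hK K n ^ 2 + ∑ k ∈ Finset.range (n + 1), (k : K)⁻¹ ^ 2 := by
    intro n
    induction n with
    | zero => simp [hK]
    | succ n ih =>
      rw [Finset.sum_range_succ, Finset.sum_range_succ (fun k : ℕ => (k : K)⁻¹ ^ 2), mul_add, ih]
      have : hK K (n + 1) = hK K n + ((n + 1 : ℕ) : K)⁻¹ := by
        unfold hK; rw [Finset.sum_range_succ]
      rw [this]; ring
  have h := key (p - 1)
  rw [hK_last p hp hodd, Nat.sub_add_cancel hp.pos] at h
  simpa [FF, L2, eval_finsetSum] using h

lemma zero_of_deriv [CharP K p] (hp : p.Prime) (g w : K[X]) (hw : w ≠ 0)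
    (hg : w * derivative g = 0) (h0 : g.eval 0 = 0) (hdeg : g.natDegree < 2 * p)
    (h1 : g.natDegree < p ∨ g.eval 1 = 0) : g = 0 := by
  have hd : derivative g = 0 := (mul_eq_zero.1 hg).resolve_left hw
  have hc : ∀ m, m ≠ p → g.coeff m = 0 := by
    intro m hm
    rcases Nat.eq_zero_or_pos m with rfl | hpos
    · rwa [coeff_zero_eq_eval_zero]
    by_cases hlt : m < 2 * p
    · have := congrArg (fun f => coeff f (m - 1)) hd
      simp only [coeff_derivative, coeff_zero] at this
      rw [Nat.sub_add_cancel hpos] at this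
      refine (mul_eq_zero.1 this).resolve_right ?_
      have e : ((m - 1 : ℕ) : K) + 1 = (m : K) := by
        rw [← Nat.cast_add_one, Nat.sub_add_cancel hpos]
      rw [e, CharP.cast_eq_zero_iff K p]
      rintro ⟨c, rfl⟩
      have : c < 2 := by
        by_contra hh
        nlinarith [hp.pos]
      interval_cases c
      · simp at hpos
      · simp at hm
    · exact coeff_eq_zero_of_natDegree_lt (by omega)
  have hg' : g = C (g.coeff p) * X ^ p := by
    ext m
    rw [coeff_C_mul_X_pow]
    split_ifs with h
    · rw [h]
    · exact hc m h
  rcases h1 with h1 | h1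
  · rw [hg', coeff_eq_zero_of_natDegree_lt h1]; simp
  · rw [hg'] at h1
    simp only [eval_mul, eval_C, eval_pow, eval_X, one_pow, mul_one] at h1
    rw [hg', h1]; simp

lemma deg_refl (f : K[X]) (n : ℕ) (hf : f.natDegree ≤ n) : (f.comp (1 - X)).natDegree ≤ n := by
  rw [natDegree_comp]
  have : (1 - X : K[X]).natDegree ≤ 1 := by compute_degree
  nlinarith

lemma w_ne : (X * (1 - X) : K[X]) ≠ 0 := by
  intro h
  have := congrArg (fun f => coeff f 1) h
  simp [mul_sub, coeff_one, coeff_X] at this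

lemma L1_deg (hp : 0 < p) : (L1 K p).natDegree ≤ p - 1 := deg_sum_lt p hp _
lemma L2_deg (hp : 0 < p) : (L2 K p).natDegree ≤ p - 1 := deg_sum_lt p hp _
lemma FF_deg (hp : 0 < p) : (FF K p).natDegree ≤ p - 1 := deg_sum_lt p hp _

lemma deriv_refl (f : K[X]) : derivative (f.comp (1 - X)) = - (derivative f).comp (1 - X) := by
  rw [derivative_comp]; simp

lemma L1_refl [CharP K p] (hp : p.Prime) (hodd : Odd p) : (L1 K p).comp (1 - X) = L1 K p := by
  have : Fact p.Prime := ⟨hp⟩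
  have hh := hp.pos
  refine sub_eq_zero.1 (zero_of_deriv p hp _ _ w_ne ?_ ?_ ?_ ?_)
  · have h := XL1 (K := K) p hp.pos
    have h2 := congrArg (fun f => f.comp (1 - X)) h
    simp only [mul_comp, sub_comp, X_comp, one_comp, pow_comp] at h2
    rw [sub_pow_char, one_pow] at h2
    rw [derivative_sub, deriv_refl]
    linear_combination - h - h2
  · simp [eval_comp, L1_zero, L1_one p hp hodd]
  · have := natDegree_sub_le_of_le (deg_refl _ _ (L1_deg (K := K) p hh)) (L1_deg (K := K) p hh)
    simp at this; omega
  · right; simp [eval_comp, L1_zero, L1_one p hp hodd]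

lemma L2_refl_deriv [CharP K p] (hp : p.Prime) (hodd : Odd p) :
    (1 - X) * (derivative (L2 K p)).comp (1 - X) = L1 K p := by
  have h2 := congrArg (fun f => f.comp (1 - X)) (XL2 (K := K) p)
  simp only [mul_comp, X_comp] at h2
  rw [h2, L1_refl p hp hodd]

lemma FF_eq [CharP K p] (hp : p.Prime) (hodd : Odd p) :
    FF K p - L2 K p + (L2 K p).comp (1 - X) - C ((L2 K p).eval 1) = 0 := by
  have hh := hp.pos
  have hdeg : (FF K p - L2 K p + (L2 K p).comp (1 - X) - C ((L2 K p).eval 1)).natDegree ≤ p - 1 := by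
    refine natDegree_sub_le_of_le (n := p - 1) (natDegree_add_le_of_degree_le (n := p - 1) (natDegree_sub_le_of_le (n := p - 1) (FF_deg p hh) (L2_deg p hh) |>.trans (by simp)) (deg_refl _ _ (L2_deg p hh))) ((natDegree_C _).le.trans (Nat.zero_le (p - 1))) |>.trans (by simp)
  refine zero_of_deriv p hp _ _ w_ne ?_ ?_ (by omega) (Or.inl (by omega))
  · simp only [derivative_sub, derivative_add, deriv_refl, derivative_C]
    linear_combination XFF (K := K) p hp hodd - (1 - X) * XL2 (K := K) p
      - X * L2_refl_deriv (K := K) p hp hodd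
  · simp [eval_comp, L2_zero, FF_zero]

lemma deriv_Xp [CharP K p] : derivative (X ^ p : K[X]) = 0 := by
  rw [derivative_X_pow]; simp

lemma sq_eq [CharP K p] (hp : p.Prime) (hodd : Odd p) :
    L1 K p * L1 K p + (2 * (X ^ p * L2 K p) + (2 * ((1 - X ^ p) * (L2 K p).comp (1 - X))
      - C (2 * (L2 K p).eval 1))) = 0 := by
  have hh := hp.pos
  have d1 := L1_deg (K := K) p hh
  have d2 := L2_deg (K := K) p hh
  have d3 := deg_refl _ _ d2
  have hdeg : (L1 K p * L1 K p + (2 * (X ^ p * L2 K p) + (2 * ((1 - X ^ p) * (L2 K p).comp (1 - X))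
      - C (2 * (L2 K p).eval 1)))).natDegree ≤ 2 * p - 1 := by
    have e1 : (L1 K p * L1 K p).natDegree ≤ 2 * p - 1 := natDegree_mul_le.trans (by omega)
    have e0 : ∀ f : K[X], (2 * f).natDegree ≤ f.natDegree := by
      intro f
      refine natDegree_mul_le.trans ?_
      simp
    have e2 : (2 * (X ^ p * L2 K p)).natDegree ≤ 2 * p - 1 :=
      (e0 _).trans (natDegree_mul_le.trans (by simp; omega))
    have e4 : (1 - X ^ p : K[X]).natDegree ≤ p := by
      refine (natDegree_sub_le _ _).trans (by simp)
    have e3 : (2 * ((1 - X ^ p) * (L2 K p).comp (1 - X))).natDegree ≤ 2 * p - 1 :=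
      (e0 _).trans (natDegree_mul_le.trans (by omega))
    refine natDegree_add_le_of_degree_le e1 (natDegree_add_le_of_degree_le e2 ?_)
    refine (natDegree_sub_le _ _).trans (max_le e3 ?_)
    rw [natDegree_C]; omega
  refine zero_of_deriv p hp _ _ w_ne ?_ ?_ (by omega) (Or.inr ?_)
  · simp only [derivative_sub, derivative_add, derivative_mul, deriv_refl, derivative_C, deriv_Xp, derivative_one, derivative_ofNat]
    linear_combination (2 * L1 K p) * XL1 (K := K) p hp.pos + 2 * X ^ p * (1 - X) * XL2 (K := K) p
      - 2 * (1 - X ^ p) * X * L2_refl_deriv (K := K) p hp hodd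
  · simp [eval_comp, L2_zero, L1_zero, hp.ne_zero]
  · simp [eval_comp, L2_zero, L1_one p hp hodd]

lemma dbl_eq [CharP K p] (hp : p.Prime) (hodd : Odd p) :
    (L1 K p).comp (X ^ 2) - ((1 - X ^ p) * (L1 K p).comp (-X) + (1 + X ^ p) * L1 K p) = 0 := by
  have hh := hp.pos
  have d1 := L1_deg (K := K) p hh
  have hw : (X * (1 - X) * (1 + X) : K[X]) ≠ 0 := by
    refine mul_ne_zero w_ne ?_
    intro h
    have := congrArg (fun f => eval 0 f) h
    simp at this
  refine zero_of_deriv p hp _ _ hw ?_ ?_ ?_ (Or.inr ?_)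
  · have h := XL1 (K := K) p hp.pos
    have h2 := congrArg (fun f => f.comp (X ^ 2)) h
    have h3 := congrArg (fun f => f.comp (-X)) h
    simp only [mul_comp, sub_comp, X_comp, one_comp, pow_comp, hodd.neg_pow] at h2 h3
    simp only [derivative_sub, derivative_add, derivative_mul, derivative_comp, derivative_C, deriv_Xp, derivative_one, derivative_X_pow, derivative_neg, derivative_X]
    have e : ((X : K[X]) ^ 2) ^ p = (X ^ p) ^ 2 := by ring
    rw [e] at h2
    have h2' : X * (X * (1 - X ^ 2) * (derivative (L1 K p)).comp (X ^ 2)) * X = X * (X ^ 2 - (X ^ p) ^ 2) := by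
      linear_combination X * h2
    simp only [Nat.cast_ofNat, map_ofNat, Nat.add_one_sub_one, pow_one, derivative_one]
    linear_combination 2 * h2 - (1 - X ^ p) * (1 - X) * h3 - (1 + X ^ p) * (1 + X) * h
  · simp [eval_comp, L1_zero]
  · have e1 : ((L1 K p).comp (X ^ 2)).natDegree ≤ 2 * p - 1 := by
      rw [natDegree_comp]; simp; omega
    have e2 : ((L1 K p).comp (-X)).natDegree ≤ p - 1 := by
      rw [natDegree_comp]; simpa using d1
    have e4 : (1 - X ^ p : K[X]).natDegree ≤ p := by
      refine (natDegree_sub_le _ _).trans (by simp)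
    have e5 : (1 + X ^ p : K[X]).natDegree ≤ p := by
      refine (natDegree_add_le _ _).trans (by simp)
    have e6 := (natDegree_sub_le ((L1 K p).comp (X ^ 2)) ((1 - X ^ p) * (L1 K p).comp (-X) + (1 + X ^ p) * L1 K p)).trans (max_le e1 (natDegree_add_le_of_degree_le (natDegree_mul_le.trans (by omega)) (natDegree_mul_le.trans (by omega))))
    omega
  · simp [eval_comp, L1_one p hp hodd]

/-- main identity in K -/
lemma main_K [CharP K p] (hp : p.Prime) (hodd : Odd p) (i q : K) (hi : i ^ 2 = -1)
    (hq : (L1 K p).eval (-1) = -2 * q) :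
    16 * ((FF K p).eval 1 + (FF K p).eval (-1) - (FF K p).eval i - (FF K p).eval (-i))
      = 12 * q ^ 2 := by
  have h2 := two_ne (K := K) p hp hodd
  have hF : ∀ x : K, (FF K p).eval x = (L2 K p).eval x - (L2 K p).eval (1 - x) + (L2 K p).eval 1 := by
    intro x
    have := congrArg (fun f => eval x f) (FF_eq (K := K) p hp hodd)
    simp [eval_comp] at this
    linear_combination this
  have hS : ∀ x : K, (L1 K p).eval x ^ 2 + 2 * x ^ p * (L2 K p).eval x
      + 2 * (1 - x ^ p) * (L2 K p).eval (1 - x) = 2 * (L2 K p).eval 1 := by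
    intro x
    have := congrArg (fun f => eval x f) (sq_eq (K := K) p hp hodd)
    simp [eval_comp] at this
    linear_combination this
  have hD : (L1 K p).eval (-1) = (1 - i ^ p) * (L1 K p).eval (-i) + (1 + i ^ p) * (L1 K p).eval i := by
    have := congrArg (fun f => eval i f) (dbl_eq (K := K) p hp hodd)
    simp [eval_comp, hi] at this
    linear_combination this
  have hI1 := L1_inv (K := K) p hp.pos i (-i) (by linear_combination -hi)
  have hI2 := L2_inv (K := K) p hp.pos i (-i) (by linear_combination -hi)
  have hI3 := L2_inv (K := K) p hp.pos (-1) (-1) (by ring)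
  rw [hodd.neg_one_pow] at hI3
  have hM : (L2 K p).eval (-1) = 0 := by
    have : 2 * (L2 K p).eval (-1) = 0 := by linear_combination -hI3
    exact (mul_eq_zero.1 this).resolve_left h2
  have hc := FF_one (K := K) p hp hodd
  have f1 := hF 1
  have fm := hF (-1)
  have fi := hF i
  have fi' := hF (-i)
  have sm := hS (-1)
  have si := hS i
  have si' := hS (-i)
  rw [hodd.neg_one_pow] at sm
  rw [hodd.neg_pow] at si'
  have he : (i ^ p) ^ 2 = -1 := by
    rw [← pow_mul, mul_comm, pow_mul, hi, hodd.neg_one_pow]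
  have z : (L2 K p).eval (1 - 1) = 0 := by rw [sub_self, L2_zero]
  rw [sub_neg_eq_add 1 i] at si' fi'
  rw [show (1 : K) - -1 = 2 by ring] at sm fm
  rw [z] at f1
  rw [f1, fm, fi, fi', hM]
  rw [f1] at hc
  rw [hM, hq] at sm
  rw [hq] at hD
  generalize i ^ p = e at *
  generalize (L2 K p).eval 1 = c at *
  generalize (L2 K p).eval 2 = t at *
  generalize (L2 K p).eval (1 + i) = A at *
  generalize (L2 K p).eval (1 - i) = B at *
  generalize (L2 K p).eval i = P at *
  generalize (L2 K p).eval (-i) = Q at *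
  generalize (L1 K p).eval i = u at *
  generalize (L1 K p).eval (-i) = v at *
  have hv : v = e * u := by linear_combination -e * hI1 + v * he
  have hQ : Q = -e * P := by linear_combination -e * hI2 + Q * he
  subst hv hQ
  have hqu : q = - (1 + e) * u := by
    have : 2 * (q + (1 + e) * u) = 0 := by linear_combination -hD + u * he
    linear_combination (mul_eq_zero.1 this).resolve_left h2
  subst hqu
  -- sum of A and B
  have hB : 4 * B = (1 + e) * (2 * c - u ^ 2 - 2 * e * P) := by
    linear_combination (1 + e) * si + 2 * B * he
  have hA : 4 * A = (1 - e) * (2 * c - (e * u) ^ 2 + 2 * P) := by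
    linear_combination (1 - e) * si' + (2 * A - 2 * P * (1 - e)) * he
  have ht : 4 * t = 2 * c - 4 * ((1 + e) * u) ^ 2 := by
    linear_combination sm
  have h16 : 4 * ((1 + e) * u) ^ 2 = 4 * (2 * e) * u ^ 2 := by linear_combination 4 * u ^ 2 * he
  linear_combination (exp := 1) 4 * hA + 4 * hB - 4 * ht + 8 * hc + (-8 * P + 4 * e * u ^ 2) * he


lemma choose_pred [CharP K p] (k : ℕ) (hp : 0 < p) (hk : k < p) :
    ((p - 1).choose k : K) = (-1) ^ k := by
  induction k with
  | zero => simp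
  | succ k ih =>
    have h := Nat.choose_succ_right_eq (p - 1) k
    have h' : ((p - 1).choose (k + 1) : K) * ((k + 1 : ℕ) : K)
        = ((p - 1).choose k : K) * ((p - 1 - k : ℕ) : K) := by
      rw [← Nat.cast_mul, ← Nat.cast_mul, h]
    have hc : ((p - 1 - k : ℕ) : K) = - ((k + 1 : ℕ) : K) := by
      have : ((p - 1 - k : ℕ) : K) + ((k + 1 : ℕ) : K) = ((p : ℕ) : K) := by
        rw [← Nat.cast_add]; congr 1; omega
      rw [CharP.cast_eq_zero K p] at this
      linear_combination this
    rw [ih (by omega), hc] at h'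
    refine mul_right_cancel₀ (natCast_ne (K := K) p (k := k + 1) (by omega) hk) ?_
    rw [h']; ring

lemma fermat_K [CharP K p] (hp : p.Prime) (hodd : Odd p) (q : ℤ)
    (hq : (2 : ℤ) ^ (p - 1) - 1 = p * q) : (L1 K p).eval (-1) = -2 * (q : K) := by
  have hd : ∀ k ∈ Finset.range (p - 1), ∃ c : ℕ, p.choose (k + 1) = p * c := by
    intro k hk
    have := Finset.mem_range.1 hk
    exact hp.dvd_choose_self (by omega) (by omega)
  choose! c hc using hd
  have hcK : ∀ k ∈ Finset.range (p - 1), (c k : K) = (-1) ^ k * ((k + 1 : ℕ) : K)⁻¹ := by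
    intro k hk
    have hk' := Finset.mem_range.1 hk
    have h1 := Nat.add_one_mul_choose_eq (p - 1) k
    rw [Nat.sub_add_cancel hp.pos, hc k hk, mul_assoc] at h1
    have h2 := Nat.eq_of_mul_eq_mul_left hp.pos h1
    have h3 : ((p - 1).choose k : K) = (c k : K) * ((k + 1 : ℕ) : K) := by
      rw [← Nat.cast_mul, ← h2]
    rw [choose_pred p k hp.pos (by omega)] at h3
    rw [h3, mul_assoc, mul_inv_cancel₀ (natCast_ne (K := K) p (by omega) (by omega)), mul_one]
  have hs : (2 : ℤ) * q = ∑ k ∈ Finset.range (p - 1), (c k : ℤ) := by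
    have h := Nat.sum_range_choose p
    rw [Finset.sum_range_succ] at h
    obtain ⟨n, hn⟩ : ∃ n, p = n + 1 := ⟨p - 1, by have := hp.pos; omega⟩
    have e : ∑ k ∈ Finset.range p, p.choose k = (∑ k ∈ Finset.range (p - 1), p.choose (k + 1)) + p.choose 0 := by
      rw [← Finset.sum_range_succ', Nat.sub_add_cancel hp.pos]
    rw [e, Finset.sum_congr rfl hc, ← Finset.mul_sum, Nat.choose_zero_right, Nat.choose_self] at h
    have h' : (p : ℤ) * (∑ k ∈ Finset.range (p - 1), (c k : ℤ)) + 1 + 1 = 2 ^ p := by exact_mod_cast h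
    have h2 : (2 : ℤ) ^ p = 2 * 2 ^ (p - 1) := by
      rw [← pow_succ', Nat.sub_add_cancel hp.pos]
    have hp0 : (p : ℤ) ≠ 0 := by exact_mod_cast hp.ne_zero
    refine mul_left_cancel₀ hp0 ?_
    linear_combination (-2) * hq - h' - h2
  have hs' : (2 : K) * q = ∑ k ∈ Finset.range (p - 1), (c k : K) := by
    have := congrArg (fun z : ℤ => (z : K)) hs
    push_cast at this
    exact this
  rw [Finset.sum_congr rfl hcK] at hs'
  rw [L1_eval]
  have e : ∑ k ∈ Finset.range p, (k : K)⁻¹ ^ 1 * (-1) ^ k = (∑ k ∈ Finset.range (p - 1), ((k + 1 : ℕ) : K)⁻¹ ^ 1 * (-1) ^ (k + 1)) + ((0 : ℕ) : K)⁻¹ ^ 1 * (-1) ^ 0 := by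
    rw [← Finset.sum_range_succ' (fun k : ℕ => (k : K)⁻¹ ^ 1 * (-1) ^ k), Nat.sub_add_cancel hp.pos]
  rw [e, neg_mul, hs', ← Finset.sum_neg_distrib, Nat.cast_zero, inv_zero, pow_one, zero_mul, add_zero]
  refine Finset.sum_congr rfl fun k _ => ?_
  ring

/-- reduction of a p-integral rational into K -/
def RelK (K : Type*) [Field K] (x : ℚ) (a : K) : Prop :=
  ∃ n d : ℤ, (d : K) ≠ 0 ∧ x * d = n ∧ a * d = n

lemma RelK.add {x y : ℚ} {a b : K} (h1 : RelK K x a) (h2 : RelK K y b) : RelK K (x + y) (a + b) := by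
  obtain ⟨n, d, hd, e1, e2⟩ := h1
  obtain ⟨m, f, hf, e3, e4⟩ := h2
  refine ⟨n * f + m * d, d * f, by push_cast; exact mul_ne_zero hd hf, ?_, ?_⟩
  · push_cast; linear_combination f * e1 + d * e3
  · push_cast; linear_combination f * e2 + d * e4

lemma RelK.mul {x y : ℚ} {a b : K} (h1 : RelK K x a) (h2 : RelK K y b) : RelK K (x * y) (a * b) := by
  obtain ⟨n, d, hd, e1, e2⟩ := h1
  obtain ⟨m, f, hf, e3, e4⟩ := h2
  refine ⟨n * m, d * f, by push_cast; exact mul_ne_zero hd hf, ?_, ?_⟩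
  · push_cast; rw [← e1, ← e3]; ring
  · push_cast; rw [← e2, ← e4]; ring

lemma RelK.int (n : ℤ) : RelK K (n : ℚ) (n : K) := ⟨n, 1, by simp, by simp, by simp⟩

lemma RelK.inv_nat (n : ℕ) (hn : (n : K) ≠ 0) : RelK K (n : ℚ)⁻¹ (n : K)⁻¹ := by
  have : (n : ℚ) ≠ 0 := by
    rintro h
    rw [Nat.cast_eq_zero] at h
    subst h
    simp at hn
  exact ⟨1, n, by simpa using hn, by simp [this], by simp [hn]⟩

lemma RelK.sum (s : Finset ℕ) (f : ℕ → ℚ) (g : ℕ → K) (h : ∀ k ∈ s, RelK K (f k) (g k)) :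
    RelK K (∑ k ∈ s, f k) (∑ k ∈ s, g k) := by
  classical
  induction s using Finset.induction_on with
  | empty => simpa using RelK.int (K := K) 0
  | insert a s ha ih =>
    rw [Finset.sum_insert ha, Finset.sum_insert ha]
    exact (h a (by simp)).add (ih fun k hk => h k (by simp [hk]))

lemma RelK.num_dvd [CharP K p] (hp : p.Prime) {x : ℚ} (h : RelK K x 0) : (p : ℤ) ∣ x.num := by
  obtain ⟨n, d, hd, e1, e2⟩ := h
  rw [zero_mul] at e2
  have hn : (p : ℤ) ∣ n := (CharP.intCast_eq_zero_iff K p n).1 e2.symm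
  have hd' : ¬ (p : ℤ) ∣ d := fun h => hd ((CharP.intCast_eq_zero_iff K p d).2 h)
  have h3 : x.num * d = n * x.den := by
    have := Rat.num_div_den x
    have hden : (x.den : ℚ) ≠ 0 := by exact_mod_cast x.den_nz
    have h4 : (x.num : ℚ) * d = n * x.den := by
      rw [← e1]
      have : (x.num : ℚ) = x * x.den := by rw [Rat.mul_den_eq_num]
      rw [this]; ring
    exact_mod_cast h4
  have : (p : ℤ) ∣ x.num * d := h3 ▸ hn.mul_right _
  exact ((Nat.prime_iff_prime_int.1 hp).dvd_or_dvd this).resolve_right hd'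

lemma ind_four (i : K) (hi : i ^ 2 = -1) (k : ℕ) :
    (1 : K) ^ k + (-1) ^ k - i ^ k - (-i) ^ k = if k % 4 = 2 then 4 else 0 := by
  have h4 : i ^ 4 = 1 := by linear_combination (i ^ 2 - 1) * hi
  have h4' : (-i) ^ 4 = 1 := by linear_combination (i ^ 2 - 1) * hi
  have hm : (-1 : K) ^ 4 = 1 := by norm_num
  have hk := Nat.div_add_mod k 4
  have hr : k % 4 < 4 := Nat.mod_lt _ (by norm_num)
  rw [← hk]
  simp only [pow_add, pow_mul, h4, h4', hm, one_pow, one_mul, Nat.mul_add_mod_self_left, Nat.mod_mod]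
  generalize k % 4 = r at *
  interval_cases r
  · norm_num
  · norm_num
  · norm_num; linear_combination (-2) * hi
  · norm_num; ring

end aux

theorem stmt16 (p : ℕ) (hp : p.Prime) (hodd : Odd p) :
    ratModEq p
      (∑ k ∈ (Finset.Icc 1 (p - 1)).filter (fun k => k % 4 = 2), H k / k)
      (3 / 16 * (((2 : ℚ) ^ (p - 1) - 1) / p) ^ 2) := by
  have : Fact p.Prime := ⟨hp⟩
  let K := AlgebraicClosure (ZMod p)
  have : CharP K p := charP_of_injective_algebraMap (algebraMap (ZMod p) K).injective p
  have h2 := two_ne (K := K) p hp hodd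
  obtain ⟨i, hi⟩ : ∃ i : K, i ^ 2 = -1 := by
    obtain ⟨z, hz⟩ := IsAlgClosed.exists_pow_nat_eq (-1 : K) (n := 2) (by norm_num)
    exact ⟨z, hz⟩
  obtain ⟨q, hq⟩ : ∃ q : ℤ, (2 : ℤ) ^ (p - 1) - 1 = p * q := by
    have hcop : IsCoprime (2 : ℤ) p := by
      have : Nat.Coprime 2 p := hodd.coprime_two_left
      exact_mod_cast Nat.isCoprime_iff_coprime.2 this
    exact (Int.ModEq.pow_card_sub_one_eq_one hp hcop).symm.dvd
  have hmain := main_K (K := K) p hp hodd i q hi (fermat_K p hp hodd q hq)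
  have hsum : (FF K p).eval 1 + (FF K p).eval (-1) - (FF K p).eval i - (FF K p).eval (-i)
      = 4 * ∑ k ∈ (Finset.Icc 1 (p - 1)).filter (fun k => k % 4 = 2), hK K k * (k : K)⁻¹ := by
    have e : (Finset.Icc 1 (p - 1)).filter (fun k => k % 4 = 2)
        = (Finset.range p).filter (fun k => k % 4 = 2) := by
      ext k
      simp only [Finset.mem_filter, Finset.mem_Icc, Finset.mem_range]
      omega
    rw [e, Finset.sum_filter, Finset.mul_sum]
    simp only [FF, eval_finsetSum, eval_mul, eval_C, eval_pow, eval_X]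
    rw [← Finset.sum_add_distrib, ← Finset.sum_sub_distrib, ← Finset.sum_sub_distrib]
    refine Finset.sum_congr rfl fun k _ => ?_
    have := ind_four i hi k
    split_ifs at this ⊢ <;> linear_combination hK K k * (k : K)⁻¹ * this
  have hrel : RelK K (∑ k ∈ (Finset.Icc 1 (p - 1)).filter (fun k => k % 4 = 2), H k / k)
      (∑ k ∈ (Finset.Icc 1 (p - 1)).filter (fun k => k % 4 = 2), hK K k * (k : K)⁻¹) := by
    refine RelK.sum _ _ _ fun k hk => ?_
    have hk' := Finset.mem_Icc.1 (Finset.mem_filter.1 hk).1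
    rw [div_eq_mul_inv]
    refine RelK.mul ?_ (RelK.inv_nat k (natCast_ne p (by omega) (by omega)))
    have e : hK K k = ∑ j ∈ Finset.Icc 1 k, (j : K)⁻¹ := by
      rw [hK, Finset.range_eq_Ico, Finset.sum_eq_sum_Ico_succ_bot (by omega)]
      simp [Finset.Ico_add_one_right_eq_Icc]
    rw [e, H]
    refine RelK.sum _ _ _ fun j hj => ?_
    have hj' := Finset.mem_Icc.1 hj
    rw [one_div]
    exact RelK.inv_nat j (natCast_ne p (by omega) (by omega))
  have hqQ : ((2 : ℚ) ^ (p - 1) - 1) / p = q := by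
    have hp0 : (p : ℚ) ≠ 0 := by exact_mod_cast hp.ne_zero
    rw [div_eq_iff hp0]
    have : (2 : ℚ) ^ (p - 1) - 1 = p * q := by exact_mod_cast hq
    rw [this]; ring
  have h16 : ((16 : ℕ) : K) ≠ 0 := by
    have : ((16 : ℕ) : K) = 2 ^ 4 := by norm_num
    rw [this]; exact pow_ne_zero _ h2
  have hr2 := hrel.add (((RelK.int (K := K) (-3)).mul (RelK.inv_nat 16 h16)).mul
    ((RelK.int (K := K) q).mul (RelK.int q)))
  unfold ratModEq
  refine RelK.num_dvd (K := K) p hp ?_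
  convert hr2 using 1
  · rw [hqQ]; push_cast; ring
  · have h44 : (4 : K) ≠ 0 := by
      have : (4 : K) = 2 ^ 2 := by norm_num
      rw [this]; exact pow_ne_zero _ h2
    rw [hsum] at hmain
    refine mul_left_cancel₀ (mul_ne_zero h44 h16) ?_
    rw [mul_zero]
    generalize (∑ k ∈ (Finset.Icc 1 (p - 1)).filter (fun k => k % 4 = 2), hK K k * (k : K)⁻¹) = S at *
    have hinv : ((16 : ℕ) : K) * ((16 : ℕ) : K)⁻¹ = 1 := mul_inv_cancel₀ h16
    push_cast at hinv ⊢
    linear_combination (-1) * hmain + 12 * (q : K) ^ 2 * hinv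
end
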